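/- Let X = A R U be an elliptical random vector in ℝ^d, d ≥ 2, with F(0) = 0 and upper endpoint x_F = 1, and suppose F is in the max-domain of attraction of the Weibull law Ψ_γ for some γ ∈ (0, ∞). Then, as u ↓ 0, P(‖X‖ > (1−u)√λ_(m)) = (1+o(1)) C_* · (Γ(γ+1)/Γ(γ + (d−m+2)/2)) · (Γ(d/2)/Γ(m/2)) · (2u)^{(d−m)/2} · (1 − F(1−u)). -/

import Mathlib

open MeasureTheory Filter Topology Matrix ProbabilityTheory

noncomputable section

/-- The Euclidean norm of a vector in `ℝ^d`. -/
def eNorm {d : ℕ} (x : Fin d → ℝ) : ℝ := Real.sqrt (∑ i, x i ^ 2)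

/-- `U` is uniformly distributed on the unit sphere of `ℝ^d`: it takes values in the unit
sphere and its distribution is invariant under orthogonal transformations. -/
def IsUniformOnSphere {Ω : Type*} [MeasurableSpace Ω] (P : Measure Ω) {d : ℕ}
    (U : Ω → Fin d → ℝ) : Prop :=
  Measurable U ∧ (∀ ω, eNorm (U ω) = 1) ∧
    ∀ D : Matrix (Fin d) (Fin d) ℝ, D * Dᵀ = 1 →
      P.map (fun ω => D.mulVec (U ω)) = P.map U

/-- The density of the Beta distribution with parameters `a, b`. -/
def betaPDF (a b x : ℝ) : ℝ :=
  if 0 < x ∧ x < 1 then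
    x ^ (a - 1) * (1 - x) ^ (b - 1) * (Real.Gamma (a + b) / (Real.Gamma a * Real.Gamma b))
  else 0

/-!
Diagonalising `Aᵀ A`, which has the same eigenvalues as `A Aᵀ`, in an orthonormal basis `v` gives
`‖X‖ = √λ · R · √(1 - V)` with `λ = λ_(m)` and `V = ∑ i, (1 - λ_i / λ) * ⟪v i, U⟫ ^ 2`, a variable
independent of `R`.

Only the `d - m` directions with `λ_i < λ` contribute to `V`. The uniform law on the sphere is the
law of a normalised uniform point of the unit ball, so `P(V ≤ s)` is a ratio of volumes, whose
numerator is that of the part of the ball cut out by a cone. Stretching these `d - m` directions by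
`s ^ (-1 / 2)` shows that the volume is of order `s ^ ((d - m) / 2)`.

The event `R √(1 - V) > 1 - u` forces `V < 2u`, and for `V = 2uw` it is `R > 1 - u (1 - w + o(1))`,
which is `(1 - w) ^ γ` times as likely as `R > 1 - u`. Averaging over `V` by the layer-cake formula
produces the integral of `(1 - t ^ γ⁻¹) ^ ((d - m) / 2)` over `0 < t < 1`, a Beta integral.
-/

section Squeeze

variable {α : Type*} {l : Filter α} {f : α → ℝ} {φ : ℝ → α → ℝ} {Φ : ℝ → ℝ} {x : ℝ}

theorem tendsto_of_eventually_le_of_continuousAt (hΦ : ContinuousAt Φ x)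
    (hφ : ∀ᶠ w in 𝓝[≠] x, Tendsto (φ w) l (𝓝 (Φ w)))
    (hleft : ∀ᶠ w in 𝓝[<] x, ∀ᶠ u in l, φ w u ≤ f u)
    (hright : ∀ᶠ w in 𝓝[>] x, ∀ᶠ u in l, f u ≤ φ w u) :
    Tendsto f l (𝓝 (Φ x)) := by
  refine tendsto_order.2 ⟨fun a ha => ?_, fun a ha => ?_⟩
  · obtain ⟨w, hwa, hw, hwf⟩ := ((hΦ.eventually (lt_mem_nhds ha)).filter_mono
      nhdsWithin_le_nhds |>.and ((hφ.filter_mono (nhdsLT_le_nhdsNE x)).and hleft)).exists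
    filter_upwards [hw.eventually (lt_mem_nhds hwa), hwf] with u h₁ h₂ using h₁.trans_le h₂
  · obtain ⟨w, hwa, hw, hwf⟩ := ((hΦ.eventually (gt_mem_nhds ha)).filter_mono
      nhdsWithin_le_nhds |>.and ((hφ.filter_mono (nhdsGT_le_nhdsNE x)).and hright)).exists
    filter_upwards [hw.eventually (gt_mem_nhds hwa), hwf] with u h₁ h₂ using h₂.trans_lt h₁

end Squeeze

section WeibullTail

variable {Ω : Type*} [MeasurableSpace Ω] {P : Measure Ω}

/-- The survival function (tail) `x ↦ P(Y > x)` of a real random variable `Y`. -/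
def survival (P : Measure Ω) (Y : Ω → ℝ) (x : ℝ) : ℝ :=
  P.real {ω | x < Y ω}

theorem survival_nonneg (Y : Ω → ℝ) (x : ℝ) : 0 ≤ survival P Y x :=
  measureReal_nonneg

theorem survival_antitone [IsFiniteMeasure P] (Y : Ω → ℝ) : Antitone (survival P Y) :=
  fun _ _ hxy => measureReal_mono fun _ hω => hxy.trans_lt hω

theorem survival_eq_one_sub [IsProbabilityMeasure P] {Y : Ω → ℝ} (hY : Measurable Y) (x : ℝ) :
    survival P Y x = 1 - P.real {ω | Y ω ≤ x} := by
  rw [survival, ← probReal_compl_eq_one_sub (measurableSet_le hY measurable_const)]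
  congr 1 with ω
  simp

/-- Regular variation of the tail `T` with index `γ` at the endpoint `1`; when `T` is the survival
function of `F`, it says that `F` is in the max-domain of attraction of the Weibull law `Ψ_γ`, with
upper endpoint `1`. -/
def HasWeibullTail (T : ℝ → ℝ) (γ : ℝ) : Prop :=
  ∀ x : ℝ, 0 < x → Tendsto (fun t => T (1 - t * x) / T (1 - t)) (𝓝[>] 0) (𝓝 (x ^ γ))

theorem hasWeibullTail_of_tendsto_atTop {T : ℝ → ℝ} {γ : ℝ} (hT : ∀ x : ℝ, 0 < x →
    Tendsto (fun u => T (1 - x / u) / T (1 - 1 / u)) atTop (𝓝 (x ^ γ))) : HasWeibullTail T γ := by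
  intro x hx
  refine ((hT x hx).comp tendsto_inv_nhdsGT_zero).congr fun t => ?_
  simp only [Function.comp_apply, div_inv_eq_mul, one_mul, mul_comm x t]

namespace HasWeibullTail

variable {T : ℝ → ℝ} {γ : ℝ}

theorem eventually_ne_zero (hT : HasWeibullTail T γ) : ∀ᶠ t in 𝓝[>] 0, T (1 - t) ≠ 0 := by
  have hlim := hT 1 one_pos
  rw [Real.one_rpow] at hlim
  filter_upwards [hlim.eventually_ne one_ne_zero] with t ht hzero
  exact ht (by rw [hzero, div_zero])

theorem tendsto_div (hT : HasWeibullTail T γ) (hanti : Antitone T) (hnonneg : ∀ x, 0 ≤ T x)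
    {ξ : ℝ → ℝ} {a : ℝ} (ha : 0 < a) (hξ : Tendsto ξ (𝓝[>] 0) (𝓝 a)) :
    Tendsto (fun t => T (1 - t * ξ t) / T (1 - t)) (𝓝[>] 0) (𝓝 (a ^ γ)) := by
  have hmono : ∀ {t w w' : ℝ}, 0 < t → w ≤ w' →
      T (1 - t * w) / T (1 - t) ≤ T (1 - t * w') / T (1 - t) := fun ht hw =>
    div_le_div_of_nonneg_right (hanti (by nlinarith)) (hnonneg _)
  refine tendsto_of_eventually_le_of_continuousAt (φ := fun w t => T (1 - t * w) / T (1 - t))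
    (Φ := fun w => w ^ γ) (Real.continuousAt_rpow_const _ _ (.inl ha.ne')) ?_ ?_ ?_
  · filter_upwards [nhdsWithin_le_nhds (lt_mem_nhds ha)] with w hw using hT w hw
  · filter_upwards [self_mem_nhdsWithin] with w hw
    filter_upwards [self_mem_nhdsWithin, hξ.eventually (lt_mem_nhds hw)] with t ht h
      using hmono ht h.le
  · filter_upwards [self_mem_nhdsWithin] with w hw
    filter_upwards [self_mem_nhdsWithin, hξ.eventually (gt_mem_nhds hw)] with t ht h
      using hmono ht h.le

/-- The ratios `T (1 - t x) / T (1 - t)` all dominate `T 1`, while their limits `x ^ γ` are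
arbitrarily small. -/
theorem apply_one_eq_zero (hT : HasWeibullTail T γ) (hγ : 0 < γ) (hanti : Antitone T)
    (hnonneg : ∀ x, 0 ≤ T x) (hle : ∀ x, T x ≤ 1) : T 1 = 0 := by
  have hbound : ∀ x : ℝ, 0 < x → T 1 ≤ x ^ γ := fun x hx => by
    refine ge_of_tendsto (hT x hx) ?_
    filter_upwards [self_mem_nhdsWithin, hT.eventually_ne_zero] with t (ht : 0 < t) hne
    rw [le_div_iff₀ ((hnonneg _).lt_of_ne' hne)]
    exact (mul_le_of_le_one_right (hnonneg 1) (hle _)).trans (hanti (by nlinarith))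
  have hlim : Tendsto (fun x : ℝ => x ^ γ) (𝓝[>] 0) (𝓝 0) := by
    simpa only [Real.zero_rpow hγ.ne'] using
      (Real.continuousAt_rpow_const 0 γ (.inr hγ.le)).tendsto.mono_left nhdsWithin_le_nhds
  exact (ge_of_tendsto hlim (eventually_mem_nhdsWithin.mono hbound)).antisymm (hnonneg 1)

end HasWeibullTail

theorem survival_eq_zero_of_hasWeibullTail [IsProbabilityMeasure P] {Y : Ω → ℝ} {γ x : ℝ}
    (hY : HasWeibullTail (survival P Y) γ) (hγ : 0 < γ) (hx : 1 ≤ x) : survival P Y x = 0 :=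
  ((survival_antitone Y hx).trans_eq <| hY.apply_one_eq_zero hγ (survival_antitone Y)
    (survival_nonneg Y) fun _ => measureReal_le_one).antisymm (survival_nonneg Y x)

end WeibullTail

section Abelian

variable {Ω : Type*} [MeasurableSpace Ω] {P : Measure Ω}

theorem measureReal_prodMk_mem_eq_integral [IsProbabilityMeasure P] {β β' : Type*}
    [MeasurableSpace β] [MeasurableSpace β'] {Y : Ω → β} {Z : Ω → β'} (hY : Measurable Y)
    (hZ : Measurable Z) (hYZ : IndepFun Y Z P) {S : Set (β × β')} (hS : MeasurableSet S) :
    P.real {ω | (Y ω, Z ω) ∈ S} = ∫ ω, P.real {ω' | (Y ω', Z ω) ∈ S} ∂P := by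
  have hslice : Measurable fun z => P {ω' | (Y ω', z) ∈ S} := by
    convert measurable_measure_prodMk_right (μ := P.map Y) hS with z
    exact (Measure.map_apply hY (measurable_prodMk_right hS)).symm
  have hlin : P {ω | (Y ω, Z ω) ∈ S} = ∫⁻ ω, P {ω' | (Y ω', Z ω) ∈ S} ∂P := by
    have : IsProbabilityMeasure (P.map Y) := Measure.isProbabilityMeasure_map hY.aemeasurable
    have : IsProbabilityMeasure (P.map Z) := Measure.isProbabilityMeasure_map hZ.aemeasurable
    calc P {ω | (Y ω, Z ω) ∈ S} = P.map (fun ω => (Y ω, Z ω)) S :=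
          (Measure.map_apply (hY.prodMk hZ) hS).symm
      _ = ∫⁻ z, P.map Y ((fun y => (y, z)) ⁻¹' S) ∂P.map Z := by
          rw [(indepFun_iff_map_prod_eq_prod_map_map hY.aemeasurable hZ.aemeasurable).1 hYZ,
            Measure.prod_apply_symm hS]
      _ = ∫⁻ ω, P.map Y ((fun y => (y, Z ω)) ⁻¹' S) ∂P :=
          lintegral_map (measurable_measure_prodMk_right hS) hZ
      _ = ∫⁻ ω, P {ω' | (Y ω', Z ω) ∈ S} ∂P :=
          lintegral_congr fun ω => Measure.map_apply hY (measurable_prodMk_right hS)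
  rw [measureReal_def, hlin]
  exact (integral_toReal (hslice.comp hZ).aemeasurable
    (.of_forall fun _ => measure_lt_top _ _)).symm

/-- The probability `P(R √(1 - v) > 1 - u)` relative to `P(R > 1 - u)`. -/
def exceedanceRatio (P : Measure Ω) (R : Ω → ℝ) (u v : ℝ) : ℝ :=
  survival P (fun ω => R ω * √(1 - v)) (1 - u) / survival P R (1 - u)

variable {R : Ω → ℝ} {u v γ : ℝ}

theorem exceedanceRatio_nonneg : 0 ≤ exceedanceRatio P R u v :=
  div_nonneg (survival_nonneg _ _) (survival_nonneg _ _)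

theorem exceedanceRatio_antitone [IsFiniteMeasure P] (hu : u ≤ 1) :
    Antitone (exceedanceRatio P R u) := by
  refine fun v v' hv => div_le_div_of_nonneg_right ?_ (survival_nonneg _ _)
  refine measureReal_mono fun ω (hω : 1 - u < R ω * √(1 - v')) => hω.trans_le ?_
  have hR : 0 < R ω := pos_of_mul_pos_left ((sub_nonneg.2 hu).trans_lt hω) (Real.sqrt_nonneg _)
  exact mul_le_mul_of_nonneg_left (Real.sqrt_le_sqrt (by linarith)) hR.le

theorem exceedanceRatio_le_one [IsFiniteMeasure P] (hu : u ≤ 1) (hv : 0 ≤ v) :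
    exceedanceRatio P R u v ≤ 1 :=
  (exceedanceRatio_antitone hu hv).trans <| by
    simpa only [exceedanceRatio, sub_zero, Real.sqrt_one, mul_one] using div_self_le_one _

theorem exceedanceRatio_eq_zero [IsProbabilityMeasure P] (hR : HasWeibullTail (survival P R) γ)
    (hγ : 0 < γ) (hu : u ≤ 1) (hv : 2 * u ≤ v) : exceedanceRatio P R u v = 0 := by
  have hsqrt : √(1 - v) ≤ 1 - u := Real.sqrt_le_iff.2 ⟨by linarith, by nlinarith [sq_nonneg u]⟩
  have hzero : survival P (fun ω => R ω * √(1 - v)) (1 - u) = 0 := by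
    refine ((measureReal_mono fun ω (hω : 1 - u < R ω * √(1 - v)) => ?_).trans_eq <|
      survival_eq_zero_of_hasWeibullTail hR hγ le_rfl).antisymm (survival_nonneg _ _)
    exact lt_of_not_ge fun hle : R ω ≤ 1 => absurd (hω.trans_le
      (mul_le_of_le_one_left (Real.sqrt_nonneg _) hle)) hsqrt.not_gt
  rw [exceedanceRatio, hzero, zero_div]

theorem tendsto_one_sub_div_sqrt_slope (w : ℝ) :
    Tendsto (fun u : ℝ => (1 - (1 - u) / √(1 - 2 * u * w)) / u) (𝓝[>] 0) (𝓝 (1 - w)) := by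
  have hsqrt : HasDerivAt (fun u : ℝ => √(1 - 2 * u * w)) (-w) 0 := by
    have hlin : HasDerivAt (fun u : ℝ => 1 - 2 * u * w) (-(2 * w)) 0 := by
      simpa using (((hasDerivAt_id (0 : ℝ)).const_mul 2).mul_const w).const_sub 1
    refine (hlin.sqrt (by norm_num)).congr_deriv ?_
    norm_num
    ring
  have hquot : HasDerivAt (fun u : ℝ => (1 - u) / √(1 - 2 * u * w)) (w - 1) 0 := by
    refine (((hasDerivAt_id' (0 : ℝ)).const_sub 1).fun_div hsqrt (by norm_num)).congr_deriv ?_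
    norm_num
    ring
  rw [← neg_sub w 1]
  refine hquot.tendsto_slope_zero_right.neg.congr fun u => ?_
  norm_num
  ring

theorem tendsto_exceedanceRatio [IsFiniteMeasure P] (hR : HasWeibullTail (survival P R) γ)
    {w : ℝ} (hw : w < 1) :
    Tendsto (fun u => exceedanceRatio P R u (2 * u * w)) (𝓝[>] 0) (𝓝 ((1 - w) ^ γ)) := by
  refine (hR.tendsto_div (survival_antitone R) (survival_nonneg R) (sub_pos.2 hw)
    (tendsto_one_sub_div_sqrt_slope w)).congr' ?_
  have hpos : ∀ᶠ u : ℝ in 𝓝[>] 0, 0 < 1 - 2 * u * w :=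
    nhdsWithin_le_nhds ((by fun_prop : ContinuousAt (fun u : ℝ => 1 - 2 * u * w) 0).eventually
      (lt_mem_nhds (by norm_num)))
  filter_upwards [self_mem_nhdsWithin, hpos] with u (hu : 0 < u) hq
  rw [mul_div_cancel₀ _ hu.ne', sub_sub_cancel]
  simp only [exceedanceRatio, survival, div_lt_iff₀ (Real.sqrt_pos.2 hq)]

variable {V : Ω → ℝ} {a c t : ℝ}

theorem tendsto_measureReal_le_mul_div_rpow
    (hV : Tendsto (fun s => P.real {ω | V ω ≤ s} / s ^ a) (𝓝[>] 0) (𝓝 c)) {w : ℝ} (hw : 0 < w) :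
    Tendsto (fun s => P.real {ω | V ω ≤ s * w} / s ^ a) (𝓝[>] 0) (𝓝 (c * w ^ a)) := by
  have hscale : Tendsto (fun s : ℝ => s * w) (𝓝[>] 0) (𝓝[>] 0) := by
    simpa only [zero_mul, id] using TendstoNhdsWithinIoi.mul_const (c := (0 : ℝ)) hw tendsto_id
  refine ((hV.comp hscale).mul_const (w ^ a)).congr' ?_
  filter_upwards [self_mem_nhdsWithin] with s (hs : 0 < s)
  rw [Function.comp_apply, Real.mul_rpow hs.le hw.le, ← div_div,
    div_mul_cancel₀ _ (Real.rpow_pos_of_pos hw a).ne']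

theorem tendsto_two_mul_nhdsGT_zero : Tendsto (fun u : ℝ => 2 * u) (𝓝[>] 0) (𝓝[>] 0) := by
  simpa only [mul_zero, id] using
    TendstoNhdsWithinIoi.const_mul (c := (0 : ℝ)) two_pos tendsto_id

theorem tendsto_measureReal_exceedanceRatio_div_rpow [IsFiniteMeasure P]
    (hR : HasWeibullTail (survival P R) γ) (hγ : 0 < γ)
    (hV : Tendsto (fun s => P.real {ω | V ω ≤ s} / s ^ a) (𝓝[>] 0) (𝓝 c))
    (ht₀ : 0 < t) (ht₁ : t < 1) :
    Tendsto (fun u => P.real {ω | t < exceedanceRatio P R u (V ω)} / (2 * u) ^ a) (𝓝[>] 0)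
      (𝓝 (c * (1 - t ^ γ⁻¹) ^ a)) := by
  have hroot : 0 < t ^ γ⁻¹ := Real.rpow_pos_of_pos ht₀ _
  have hx : 0 < 1 - t ^ γ⁻¹ := sub_pos.2 (Real.rpow_lt_one ht₀.le ht₁ (inv_pos.2 hγ))
  have hu₁ : ∀ᶠ u : ℝ in 𝓝[>] 0, u ≤ 1 := nhdsWithin_le_nhds (Iic_mem_nhds one_pos)
  refine tendsto_of_eventually_le_of_continuousAt
    (φ := fun w u => P.real {ω | V ω ≤ 2 * u * w} / (2 * u) ^ a) (Φ := fun w => c * w ^ a)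
    ((Real.continuousAt_rpow_const _ _ (.inl hx.ne')).const_mul c) ?_ ?_ ?_
  · filter_upwards [nhdsWithin_le_nhds (lt_mem_nhds hx)] with w hw
    exact (tendsto_measureReal_le_mul_div_rpow hV hw).comp tendsto_two_mul_nhdsGT_zero
  · filter_upwards [self_mem_nhdsWithin] with w (hw : w < _)
    have hlt : t < (1 - w) ^ γ :=
      (Real.rpow_inv_lt_iff_of_pos ht₀.le (by linarith) hγ).1 (by linarith)
    filter_upwards [self_mem_nhdsWithin, hu₁,
      (tendsto_exceedanceRatio hR (w := w) (by linarith)).eventually (lt_mem_nhds hlt)]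
      with u (hu : 0 < u) hu₁ hratio
    refine div_le_div_of_nonneg_right (measureReal_mono fun ω hω => ?_) (by positivity)
    exact hratio.trans_le (exceedanceRatio_antitone hu₁ hω)
  · filter_upwards [Ioo_mem_nhdsGT (show 1 - t ^ γ⁻¹ < 1 by linarith)] with w hw
    have hlt : (1 - w) ^ γ < t :=
      (Real.lt_rpow_inv_iff_of_pos (by linarith [hw.2]) ht₀.le hγ).1 (by linarith [hw.1])
    filter_upwards [self_mem_nhdsWithin, hu₁,
      (tendsto_exceedanceRatio hR hw.2).eventually (gt_mem_nhds hlt)]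
      with u (hu : 0 < u) hu₁ hratio
    refine div_le_div_of_nonneg_right (measureReal_mono fun ω (hω : t < _) => ?_) (by positivity)
    exact le_of_not_ge fun hle => (hω.trans_le (exceedanceRatio_antitone hu₁ hle)).not_gt hratio

theorem survival_div_eq_setIntegral [IsProbabilityMeasure P] (hRm : Measurable R)
    (hVm : Measurable V) (hRV : IndepFun R V P) (hV₀ : ∀ ω, 0 ≤ V ω) (hu : u ≤ 1) :
    survival P (fun ω => R ω * √(1 - V ω)) (1 - u) / survival P R (1 - u) =
      ∫ t in Set.Ioo 0 1, P.real {ω | t < exceedanceRatio P R u (V ω)} := by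
  have hS : MeasurableSet {p : ℝ × ℝ | 1 - u < p.1 * √(1 - p.2)} :=
    measurableSet_lt measurable_const (by fun_prop)
  have hle : ∀ ω, exceedanceRatio P R u (V ω) ≤ 1 := fun ω => exceedanceRatio_le_one hu (hV₀ ω)
  have hint : Integrable (fun ω => exceedanceRatio P R u (V ω)) P := by
    refine .of_bound ((exceedanceRatio_antitone hu).measurable.comp hVm).aestronglyMeasurable 1
      (.of_forall fun ω => ?_)
    rw [Real.norm_of_nonneg exceedanceRatio_nonneg]
    exact hle ω
  calc _ = ∫ ω, exceedanceRatio P R u (V ω) ∂P := by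
        simp only [exceedanceRatio]
        rw [integral_div]
        exact congrArg (· / _) (measureReal_prodMk_mem_eq_integral hRm hVm hRV hS)
    _ = ∫ t in Set.Ioi 0, P.real {ω | t < exceedanceRatio P R u (V ω)} :=
        hint.integral_eq_integral_meas_lt (.of_forall fun _ => exceedanceRatio_nonneg)
    _ = ∫ t in Set.Ioo 0 1, P.real {ω | t < exceedanceRatio P R u (V ω)} := by
        refine setIntegral_eq_of_subset_of_forall_sdiff_eq_zero measurableSet_Ioi
          Set.Ioo_subset_Ioi_self fun t ht => ?_
        have ht₁ : 1 ≤ t := not_lt.1 fun h => ht.2 ⟨ht.1, h⟩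
        simp only [((hle _).trans ht₁).not_gt, Set.ofPred_false, measureReal_empty]

theorem setIntegral_rpow_mul_one_sub_rpow {α β : ℝ} (hα : 0 < α) (hβ : 0 < β) :
    ∫ x in Set.Ioo (0 : ℝ) 1, x ^ (α - 1) * (1 - x) ^ (β - 1) = beta α β := by
  rw [← integral_Ioc_eq_integral_Ioo, beta_eq_betaIntegralReal α β hα hβ, Complex.betaIntegral,
    intervalIntegral.integral_of_le zero_le_one]
  have hcoe : ∀ x ∈ Set.Ioc (0 : ℝ) 1, (x : ℂ) ^ ((α : ℂ) - 1) * (1 - x) ^ ((β : ℂ) - 1) =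
      ((x ^ (α - 1) * (1 - x) ^ (β - 1) : ℝ) : ℂ) := fun x hx => by
    push_cast [Complex.ofReal_cpow hx.1.le, Complex.ofReal_cpow (sub_nonneg.2 hx.2)]
    rfl
  rw [setIntegral_congr_fun measurableSet_Ioc hcoe, integral_complex_ofReal, Complex.ofReal_re]

theorem setIntegral_one_sub_rpow_inv_rpow (hγ : 0 < γ) (ha : 0 < a + 1) :
    ∫ t in Set.Ioo (0 : ℝ) 1, (1 - t ^ γ⁻¹) ^ a =
      Real.Gamma (γ + 1) * Real.Gamma (a + 1) / Real.Gamma (γ + a + 1) := by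
  have hsub : ∀ x ∈ Set.Ioi (0 : ℝ), (γ * x ^ (γ - 1)) •
      (Set.Ioo 0 1).indicator (fun t => (1 - t ^ γ⁻¹) ^ a) (x ^ γ) =
      (Set.Ioo 0 1).indicator (fun x => γ * (x ^ (γ - 1) * (1 - x) ^ (a + 1 - 1))) x := by
    intro x (hx : 0 < x)
    rcases lt_or_ge x 1 with hx₁ | hx₁
    · have hmem : x ^ γ ∈ Set.Ioo 0 1 :=
        ⟨Real.rpow_pos_of_pos hx γ, Real.rpow_lt_one hx.le hx₁ hγ⟩
      rw [Set.indicator_of_mem hmem, Set.indicator_of_mem (Set.mem_Ioo.2 ⟨hx, hx₁⟩),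
        Real.rpow_rpow_inv hx.le hγ.ne', add_sub_cancel_right, smul_eq_mul, mul_assoc]
    · rw [Set.indicator_of_notMem fun h => h.2.not_ge (Real.one_le_rpow hx₁ hγ.le),
        Set.indicator_of_notMem fun h => h.2.not_ge hx₁, smul_zero]
  have hind : ∀ f : ℝ → ℝ, ∫ x in Set.Ioo 0 1, f x =
      ∫ x in Set.Ioi 0, (Set.Ioo 0 1).indicator f x := fun f => by
    rw [setIntegral_indicator measurableSet_Ioo, Set.inter_eq_right.2 Set.Ioo_subset_Ioi_self]
  rw [hind, ← integral_comp_rpow_Ioi_of_pos hγ, setIntegral_congr_fun measurableSet_Ioi hsub,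
    ← hind, integral_const_mul, setIntegral_rpow_mul_one_sub_rpow hγ ha, beta,
    Real.Gamma_add_one hγ.ne', ← add_assoc]
  ring

theorem tendsto_survival_mul_sqrt_one_sub_div [IsProbabilityMeasure P] (hRm : Measurable R)
    (hVm : Measurable V) (hRV : IndepFun R V P) (hV₀ : ∀ ω, 0 ≤ V ω)
    (hR : HasWeibullTail (survival P R) γ) (hγ : 0 < γ) (ha : 0 < a + 1)
    (hV : Tendsto (fun s => P.real {ω | V ω ≤ s} / s ^ a) (𝓝[>] 0) (𝓝 c)) :
    Tendsto (fun u => survival P (fun ω => R ω * √(1 - V ω)) (1 - u) /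
        ((2 * u) ^ a * survival P R (1 - u))) (𝓝[>] 0)
      (𝓝 (c * (Real.Gamma (γ + 1) * Real.Gamma (a + 1) / Real.Gamma (γ + a + 1)))) := by
  have hu₁ : ∀ᶠ u : ℝ in 𝓝[>] 0, u ≤ 1 := nhdsWithin_le_nhds (Iic_mem_nhds one_pos)
  have hbound : ∀ᶠ u in 𝓝[>] 0, P.real {ω | V ω ≤ 2 * u} / (2 * u) ^ a ≤ c + 1 :=
    (hV.comp tendsto_two_mul_nhdsGT_zero).eventually (ge_mem_nhds (lt_add_one c))
  rw [← setIntegral_one_sub_rpow_inv_rpow hγ ha, ← integral_const_mul]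
  have hdom : Tendsto (fun u => ∫ t in Set.Ioo 0 1,
      P.real {ω | t < exceedanceRatio P R u (V ω)} / (2 * u) ^ a) (𝓝[>] 0)
      (𝓝 (∫ t in Set.Ioo 0 1, c * (1 - t ^ γ⁻¹) ^ a)) := by
    refine tendsto_integral_filter_of_dominated_convergence (fun _ => c + 1)
      (.of_forall fun u => ?_) ?_ (integrable_const _) ?_
    · have hanti : Antitone fun t => P.real {ω | t < exceedanceRatio P R u (V ω)} :=
        fun _ _ ht => measureReal_mono fun _ hω => ht.trans_lt hω
      exact (hanti.measurable.div_const _).aestronglyMeasurable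
    · filter_upwards [self_mem_nhdsWithin, hu₁, hbound] with u (hu : 0 < u) hu₁ hle
      refine (ae_restrict_iff' measurableSet_Ioo).2 (.of_forall fun t ht => ?_)
      rw [Real.norm_of_nonneg (by positivity)]
      refine (div_le_div_of_nonneg_right (measureReal_mono fun ω hω => ?_)
        (by positivity)).trans hle
      exact le_of_not_ge fun hge => (ht.1.trans hω).ne' (exceedanceRatio_eq_zero hR hγ hu₁ hge)
    · refine (ae_restrict_iff' measurableSet_Ioo).2 (.of_forall fun t ht => ?_)
      exact tendsto_measureReal_exceedanceRatio_div_rpow hR hγ hV ht.1 ht.2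
  refine hdom.congr' ?_
  filter_upwards [hu₁] with u hu
  rw [integral_div, ← survival_div_eq_setIntegral hRm hVm hRV hV₀ hu, div_div,
    mul_comm (survival P R _)]

end Abelian

theorem measurable_normalize {E : Type*} [NormedAddCommGroup E] [NormedSpace ℝ E]
    [MeasurableSpace E] [BorelSpace E] [SecondCountableTopology E] :
    Measurable (NormedSpace.normalize : E → E) :=
  measurable_norm.inv.smul measurable_id

section RotationInvariance

open scoped RealInnerProductSpace

variable {E : Type*} [NormedAddCommGroup E] [InnerProductSpace ℝ E] [MeasurableSpace E]
  [BorelSpace E]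

/-- Invariance of a measure on a real inner product space under all linear isometries. A rotation
invariant probability measure concentrated on the unit sphere is the uniform law on the sphere. -/
def IsRotationInvariant (μ : Measure E) : Prop :=
  ∀ g : E ≃ₗᵢ[ℝ] E, μ.map g = μ

namespace IsRotationInvariant

variable {μ ν : Measure E}

theorem map_of_commute (hμ : IsRotationInvariant μ) {f : E → E} (hf : Measurable f)
    (hfg : ∀ (g : E ≃ₗᵢ[ℝ] E) x, g (f x) = f (g x)) : IsRotationInvariant (μ.map f) := by
  intro g
  have hg : Measurable g := g.continuous.measurable
  rw [Measure.map_map hg hf, show ⇑g ∘ f = f ∘ g from funext (hfg g), ← Measure.map_map hf hg,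
    hμ g]

theorem charFun_eq_of_norm_eq (hμ : IsRotationInvariant μ) {s t : E} (hst : ‖s‖ = ‖t‖) :
    charFun μ s = charFun μ t := by
  set g : E ≃ₗᵢ[ℝ] E := (ℝ ∙ (s - t))ᗮ.reflection
  have hg : g s = t := Submodule.reflection_sub hst
  calc charFun μ s = ∫ x, Complex.exp (⟪g x, g s⟫ * Complex.I) ∂μ := by
        simp only [g.inner_map_map, charFun_apply]
    _ = charFun (μ.map g) t := by
        rw [hg, charFun_apply, integral_map g.continuous.aemeasurable (by fun_prop)]
    _ = charFun μ t := by rw [hμ g]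

theorem charFun_eq_integral_charFun_smul (hμ : IsRotationInvariant μ) [IsProbabilityMeasure ν]
    (hν₁ : ∀ᵐ y ∂ν, ‖y‖ = 1) (t : E) : charFun μ t = ∫ y, charFun μ (‖t‖ • y) ∂ν := by
  have hconst : ∀ᵐ y ∂ν, charFun μ (‖t‖ • y) = charFun μ t := by
    filter_upwards [hν₁] with y hy
    exact hμ.charFun_eq_of_norm_eq (by rw [norm_smul, norm_norm, hy, mul_one])
  rw [integral_congr_ae hconst, integral_const, probReal_univ, one_smul]

/-- Averaging the characteristic functions of `μ` and `ν` over the other measure yields the same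
double integral, by symmetry of the inner product. -/
theorem ext_of_ae_norm_eq_one [CompleteSpace E] [SecondCountableTopology E]
    [IsProbabilityMeasure μ] [IsProbabilityMeasure ν] (hμ : IsRotationInvariant μ)
    (hν : IsRotationInvariant ν) (hμ₁ : ∀ᵐ x ∂μ, ‖x‖ = 1) (hν₁ : ∀ᵐ x ∂ν, ‖x‖ = 1) : μ = ν := by
  refine Measure.ext_of_charFun (funext fun t => ?_)
  have hint : Integrable (fun p : E × E => Complex.exp (⟪p.1, ‖t‖ • p.2⟫ * Complex.I))
      (μ.prod ν) := by
    refine .of_bound (by fun_prop) 1 (.of_forall fun p => ?_)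
    rw [Complex.norm_exp_ofReal_mul_I]
  calc charFun μ t = ∫ y, ∫ x, Complex.exp (⟪x, ‖t‖ • y⟫ * Complex.I) ∂μ ∂ν :=
        hμ.charFun_eq_integral_charFun_smul hν₁ t
    _ = ∫ x, ∫ y, Complex.exp (⟪x, ‖t‖ • y⟫ * Complex.I) ∂ν ∂μ := (integral_integral_swap hint).symm
    _ = ∫ x, charFun ν (‖t‖ • x) ∂μ := by
        simp only [charFun_apply, real_inner_smul_right, real_inner_comm]
    _ = charFun ν t := (hν.charFun_eq_integral_charFun_smul hμ₁ t).symm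

variable [FiniteDimensional ℝ E]

theorem cond_ball : IsRotationInvariant ((volume : Measure E)[|Metric.ball 0 1]) := by
  intro g
  have hg : MeasurePreserving g (volume.restrict (g ⁻¹' Metric.ball 0 1))
      (volume.restrict (Metric.ball 0 1)) :=
    g.measurePreserving.restrict_preimage Metric.isOpen_ball.measurableSet
  rw [g.preimage_ball, map_zero] at hg
  rw [ProbabilityTheory.cond, Measure.map_smul, hg.map_eq]

theorem eq_map_normalize_cond_ball [Nontrivial E] [IsProbabilityMeasure μ]
    (hμ : IsRotationInvariant μ) (hμ₁ : ∀ᵐ x ∂μ, ‖x‖ = 1) :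
    μ = ((volume : Measure E)[|Metric.ball 0 1]).map NormedSpace.normalize := by
  have hball : IsProbabilityMeasure ((volume : Measure E)[|Metric.ball 0 1]) :=
    cond_isProbabilityMeasure_of_finite (Metric.measure_ball_pos volume _ one_pos).ne'
      measure_ball_lt_top.ne
  have := Measure.isProbabilityMeasure_map
    (μ := (volume : Measure E)[|Metric.ball 0 1]) measurable_normalize.aemeasurable
  refine hμ.ext_of_ae_norm_eq_one (cond_ball.map_of_commute measurable_normalize fun g x => ?_)
    hμ₁ ?_
  · simp only [NormedSpace.normalize, map_smul, g.norm_map]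
  · rw [ae_map_iff measurable_normalize.aemeasurable
      (measurableSet_eq_fun measurable_norm measurable_const)]
    simp only [NormedSpace.norm_normalize_eq_one_iff]
    exact cond_absolutelyContinuous.ae_le (Measure.ae_ne (volume : Measure E) 0)

theorem measureReal_cone [Nontrivial E] [IsProbabilityMeasure μ] (hμ : IsRotationInvariant μ)
    (hμ₁ : ∀ᵐ x ∂μ, ‖x‖ = 1) {S : Set E} (hS : MeasurableSet S)
    (hcone : ∀ x, NormedSpace.normalize x ∈ S ↔ x ∈ S) :
    μ.real S = volume.real (Metric.ball (0 : E) 1 ∩ S) / volume.real (Metric.ball (0 : E) 1) := by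
  conv_lhs => rw [hμ.eq_map_normalize_cond_ball hμ₁]
  have hpre : NormedSpace.normalize ⁻¹' S = S := Set.ext hcone
  rw [map_measureReal_apply measurable_normalize hS, hpre, measureReal_def,
    cond_apply Metric.isOpen_ball.measurableSet, ENNReal.toReal_mul, ENNReal.toReal_inv,
    ← div_eq_inv_mul]
  rfl

end IsRotationInvariant

theorem eNorm_eq_norm_toLp {d : ℕ} (x : Fin d → ℝ) : eNorm x = ‖WithLp.toLp 2 x‖ := by
  simp only [eNorm, EuclideanSpace.norm_eq, Real.norm_eq_abs, sq_abs]

namespace IsUniformOnSphere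

variable {Ω : Type*} [MeasurableSpace Ω] {P : Measure Ω} {d : ℕ} {U : Ω → Fin d → ℝ}

theorem measurable_toLp (hU : IsUniformOnSphere P U) : Measurable fun ω => WithLp.toLp 2 (U ω) :=
  (WithLp.measurable_toLp 2 _).comp hU.1

theorem norm_toLp (hU : IsUniformOnSphere P U) (ω : Ω) : ‖WithLp.toLp 2 (U ω)‖ = 1 := by
  rw [← eNorm_eq_norm_toLp, hU.2.1]

theorem isRotationInvariant (hU : IsUniformOnSphere P U) :
    IsRotationInvariant (P.map fun ω => WithLp.toLp 2 (U ω)) := by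
  intro g
  have hg : Measurable g := g.continuous.measurable
  have hto : Measurable (WithLp.toLp 2 : (Fin d → ℝ) → EuclideanSpace ℝ (Fin d)) :=
    WithLp.measurable_toLp 2 _
  have hDm : ∀ D : Matrix (Fin d) (Fin d) ℝ, Measurable fun ω => D *ᵥ U ω := fun D =>
    (Continuous.matrix_mulVec continuous_const continuous_id).measurable.comp hU.1
  let b := EuclideanSpace.basisFun (Fin d) ℝ
  let D := g.toMatrix b.toBasis b.toBasis
  have hD : D * Dᵀ = 1 := Matrix.mem_unitaryGroup_iff.1 (g.toMatrix_mem_unitaryGroup b b)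
  have hDv : ∀ v, WithLp.toLp 2 (D *ᵥ v) = g (WithLp.toLp 2 v) := fun v => by
    ext i
    exact congrFun (LinearMap.toMatrix_mulVec_repr b.toBasis b.toBasis _ (WithLp.toLp 2 v)) i
  calc (P.map fun ω => WithLp.toLp 2 (U ω)).map g
      = (P.map fun ω => D *ᵥ U ω).map (WithLp.toLp 2) := by
        rw [Measure.map_map hg hU.measurable_toLp, Measure.map_map hto (hDm D)]
        exact congrArg (P.map ·) (funext fun ω => (hDv (U ω)).symm)
    _ = P.map fun ω => WithLp.toLp 2 (U ω) := by
        rw [hU.2.2 D hD, Measure.map_map hto hU.1]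
        rfl

end IsUniformOnSphere

end RotationInvariance

theorem measurableSet_norm_lt_one_and_norm_snd_lt_norm_fst {E F : Type*} [NormedAddCommGroup E]
    [MeasurableSpace E] [OpensMeasurableSpace E] [NormedAddCommGroup F] [MeasurableSpace F]
    [OpensMeasurableSpace F] :
    MeasurableSet {p : E × F | ‖p.1‖ < 1 ∧ ‖p.2‖ < ‖p.1‖} :=
  (measurableSet_lt measurable_fst.norm measurable_const).inter
    (measurableSet_lt measurable_snd.norm measurable_fst.norm)

section TruncatedCone

variable {E F : Type*} [NormedAddCommGroup E] [NormedAddCommGroup F] [NormedSpace ℝ F]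

/-- The truncated cone of points `(z, y)` with `‖z‖ ^ 2 + ‖y‖ ^ 2 < 1` at which the quadratic form
`‖L y‖ ^ 2` is at most `s` times the squared norm `‖z‖ ^ 2 + ‖y‖ ^ 2`. -/
def truncatedCone (E : Type*) {F : Type*} [NormedAddCommGroup E] [NormedAddCommGroup F]
    [NormedSpace ℝ F] (L : F ≃ₗ[ℝ] F) (s : ℝ) : Set (E × F) :=
  {p | ‖p.1‖ ^ 2 + ‖p.2‖ ^ 2 < 1 ∧ ‖L p.2‖ ^ 2 ≤ s * (‖p.1‖ ^ 2 + ‖p.2‖ ^ 2)}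

/-- The truncated cone after the substitution `y ↦ √s • L⁻¹ y`. -/
def rescaledCone (E : Type*) {F : Type*} [NormedAddCommGroup E] [NormedAddCommGroup F]
    [NormedSpace ℝ F] (L : F ≃ₗ[ℝ] F) (s : ℝ) : Set (E × F) :=
  {p | ‖p.1‖ ^ 2 + s * ‖L.symm p.2‖ ^ 2 < 1 ∧ ‖p.2‖ ^ 2 ≤ ‖p.1‖ ^ 2 + s * ‖L.symm p.2‖ ^ 2}

variable (L : F ≃ₗ[ℝ] F)

theorem eventually_mem_rescaledCone_iff {p : E × F} (h₁ : ‖p.1‖ ≠ 1) (h₂ : ‖p.2‖ ≠ ‖p.1‖) :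
    ∀ᶠ s in 𝓝 0, p ∈ rescaledCone E L s ↔ ‖p.1‖ < 1 ∧ ‖p.2‖ < ‖p.1‖ := by
  have hlim : Tendsto (fun s : ℝ => ‖p.1‖ ^ 2 + s * ‖L.symm p.2‖ ^ 2) (𝓝 0) (𝓝 (‖p.1‖ ^ 2)) :=
    (by fun_prop : Continuous _).tendsto' _ _ (by simp)
  have hfst : ∀ᶠ s in 𝓝 0, ‖p.1‖ ^ 2 + s * ‖L.symm p.2‖ ^ 2 < 1 ↔ ‖p.1‖ < 1 := by
    rcases h₁.lt_or_gt with h | h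
    · have hsq := pow_lt_one₀ (norm_nonneg _) h two_ne_zero
      filter_upwards [hlim.eventually (gt_mem_nhds hsq)] with s hs using iff_of_true hs h
    · have hsq := one_lt_pow₀ h two_ne_zero
      filter_upwards [hlim.eventually (lt_mem_nhds hsq)] with s hs using
        iff_of_false hs.not_gt h.not_gt
  have hsnd : ∀ᶠ s in 𝓝 0, ‖p.2‖ ^ 2 ≤ ‖p.1‖ ^ 2 + s * ‖L.symm p.2‖ ^ 2 ↔ ‖p.2‖ < ‖p.1‖ := by
    rcases h₂.lt_or_gt with h | h
    · have hsq := pow_lt_pow_left₀ h (norm_nonneg _) two_ne_zero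
      filter_upwards [hlim.eventually (lt_mem_nhds hsq)] with s hs using iff_of_true hs.le h
    · have hsq := pow_lt_pow_left₀ h (norm_nonneg _) two_ne_zero
      filter_upwards [hlim.eventually (gt_mem_nhds hsq)] with s hs using
        iff_of_false hs.not_ge h.not_gt
  filter_upwards [hfst, hsnd] with s h₁ h₂ using and_congr h₁ h₂

theorem rescaledCone_subset {s : ℝ} (hs : 0 ≤ s) :
    rescaledCone E L s ⊆ Metric.ball 0 1 ×ˢ Metric.ball 0 1 := by
  rintro p ⟨h₁, h₂⟩
  have hs' : 0 ≤ s * ‖L.symm p.2‖ ^ 2 := by positivity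
  constructor <;> rw [mem_ball_zero_iff, ← sq_lt_one_iff₀ (norm_nonneg _)] <;> linarith

section Measurable

variable [MeasurableSpace E] [OpensMeasurableSpace E] [FiniteDimensional ℝ F] [MeasurableSpace F]
  [BorelSpace F]

theorem measurableSet_truncatedCone (s : ℝ) : MeasurableSet (truncatedCone E L s) := by
  have hL : Measurable L := (L : F →ₗ[ℝ] F).continuous_of_finiteDimensional.measurable
  have hnorm : Measurable fun p : E × F => ‖p.1‖ ^ 2 + ‖p.2‖ ^ 2 := by fun_prop
  exact (measurableSet_lt hnorm measurable_const).inter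
    (measurableSet_le (by fun_prop) (hnorm.const_mul s))

theorem measurableSet_rescaledCone (s : ℝ) : MeasurableSet (rescaledCone E L s) := by
  have hL : Measurable L.symm :=
    (L.symm : F →ₗ[ℝ] F).continuous_of_finiteDimensional.measurable
  have hform : Measurable fun p : E × F => ‖p.1‖ ^ 2 + s * ‖L.symm p.2‖ ^ 2 := by fun_prop
  exact (measurableSet_lt hform measurable_const).inter
    (measurableSet_le (measurable_snd.norm.pow_const 2) hform)

end Measurable

end TruncatedCone

section CapVolume

open Module (finrank)

variable {E F : Type*} [NormedAddCommGroup E] [NormedSpace ℝ E] [FiniteDimensional ℝ E]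
  [MeasurableSpace E] [BorelSpace E] [NormedAddCommGroup F] [NormedSpace ℝ F]
  [FiniteDimensional ℝ F] [MeasurableSpace F] [BorelSpace F]
  (μ : Measure E) [μ.IsAddHaarMeasure] (ν : Measure F) [ν.IsAddHaarMeasure]

theorem setIntegral_Ioi_pow_mul_indicator {m : ℕ} (hm : 0 < m) (k : ℕ) (c : ℝ) :
    ∫ r in Set.Ioi (0 : ℝ), r ^ (m - 1) * (Set.Iio 1).indicator (fun r => r ^ k * c) r =
      c / (m + k) := by
  calc _ = ∫ r in Set.Ioo 0 1, r ^ (m - 1 + k) * c := by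
        rw [← Set.Ioi_inter_Iio, ← setIntegral_indicator measurableSet_Iio]
        refine integral_congr_ae (.of_forall fun r => ?_)
        by_cases hr : r ∈ Set.Iio 1
        · simp only [Set.indicator_of_mem hr, pow_add, mul_assoc]
        · simp only [Set.indicator_of_notMem hr, mul_zero]
    _ = (∫ r in (0 : ℝ)..1, r ^ (m - 1 + k)) * c := by
        rw [integral_mul_const, ← integral_Ioc_eq_integral_Ioo,
          intervalIntegral.integral_of_le zero_le_one]
    _ = c / (m + k) := by
        have hexp : m - 1 + k + 1 = m + k := by lia
        rw [integral_pow, ← Nat.cast_add_one, hexp, one_pow, zero_pow (by lia), Nat.cast_add]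
        ring

theorem measureReal_norm_lt_one_and_norm_snd_lt_norm_fst [Nontrivial E] :
    (μ.prod ν).real {p | ‖p.1‖ < 1 ∧ ‖p.2‖ < ‖p.1‖} =
      finrank ℝ E / (finrank ℝ E + finrank ℝ F) *
        (μ.real (Metric.ball 0 1) * ν.real (Metric.ball 0 1)) := by
  set f : ℝ → ℝ := (Set.Iio 1).indicator fun r => r ^ finrank ℝ F * ν.real (Metric.ball 0 1)
  have hf : Measurable f :=
    ((measurable_id.pow_const _).mul_const _).indicator measurableSet_Iio
  have hf₀ : ∀ z : E, 0 ≤ f ‖z‖ := fun z => Set.indicator_apply_nonneg fun _ => by positivity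
  have hslice : ∀ᵐ z ∂μ, ν (Prod.mk z ⁻¹' {p | ‖p.1‖ < 1 ∧ ‖p.2‖ < ‖p.1‖}) =
      ENNReal.ofReal (f ‖z‖) := by
    filter_upwards [Measure.ae_ne μ 0] with z hz
    by_cases hz₁ : ‖z‖ < 1
    · have hball : Prod.mk z ⁻¹' {p | ‖p.1‖ < 1 ∧ ‖p.2‖ < ‖p.1‖} = Metric.ball (0 : F) ‖z‖ := by
        ext y
        simp [hz₁]
      rw [hball, Measure.addHaar_ball_of_pos ν 0 (norm_pos_iff.2 hz),
        show f ‖z‖ = _ from Set.indicator_of_mem (Set.mem_Iio.2 hz₁) _,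
        ENNReal.ofReal_mul (by positivity), ofReal_measureReal measure_ball_lt_top.ne]
    · simp [f, hz₁]
  calc _ = ∫ z, f ‖z‖ ∂μ := by
        rw [measureReal_def,
          Measure.prod_apply measurableSet_norm_lt_one_and_norm_snd_lt_norm_fst,
          lintegral_congr_ae hslice, integral_eq_lintegral_of_nonneg_ae (.of_forall hf₀)
            (hf.comp measurable_norm).aestronglyMeasurable]
    _ = _ := by
        rw [integral_fun_norm_addHaar]
        simp only [smul_eq_mul, nsmul_eq_mul]
        rw [setIntegral_Ioi_pow_mul_indicator Module.finrank_pos]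
        ring

variable (L : F ≃ₗ[ℝ] F)

theorem measureReal_rescaledCone {s : ℝ} (hs : 0 < s) :
    (μ.prod ν).real (rescaledCone E L s) =
      |LinearMap.det (L : F →ₗ[ℝ] F)| *
        ((μ.prod ν).real (truncatedCone E L s) / s ^ ((finrank ℝ F : ℝ) / 2)) := by
  set T : E × F →ₗ[ℝ] E × F := LinearMap.prodMap LinearMap.id (√s • (L.symm : F →ₗ[ℝ] F))
  have hpre : T ⁻¹' truncatedCone E L s = rescaledCone E L s := by
    ext p
    have hT : T p = (p.1, √s • L.symm p.2) := rfl
    have hsq : √s ^ 2 = s := Real.sq_sqrt hs.le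
    simp only [Set.mem_preimage, hT, truncatedCone, rescaledCone, Set.mem_ofPred_eq, map_smul,
      L.apply_symm_apply, norm_smul, mul_pow, Real.norm_eq_abs, sq_abs, hsq,
      mul_le_mul_iff_right₀ hs]
  have hdet : LinearMap.det T =
      s ^ ((finrank ℝ F : ℝ) / 2) * (LinearMap.det (L : F →ₗ[ℝ] F))⁻¹ := by
    rw [LinearMap.det_prodMap, LinearMap.det_id, one_mul, LinearMap.det_smul,
      LinearEquiv.det_coe_symm, Real.sqrt_eq_rpow, ← Real.rpow_mul_natCast hs.le]
    ring_nf
  have hL₀ : LinearMap.det (L : F →ₗ[ℝ] F) ≠ 0 := L.isUnit_det'.ne_zero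
  have hspos : 0 < s ^ ((finrank ℝ F : ℝ) / 2) := by positivity
  rw [← hpre, measureReal_def, Measure.addHaar_preimage_linearMap _ (by rw [hdet]; positivity),
    ENNReal.toReal_mul, ENNReal.toReal_ofReal (abs_nonneg _), hdet, ← measureReal_def, mul_inv,
    inv_inv, abs_mul, abs_of_pos (inv_pos.2 hspos)]
  ring

theorem ae_norm_fst_ne_one_and_norm_snd_ne_norm_fst [Nontrivial E] :
    ∀ᵐ p ∂μ.prod ν, ‖p.1‖ ≠ 1 ∧ ‖p.2‖ ≠ ‖p.1‖ := by
  have hmeas : MeasurableSet {p : E × F | ‖p.1‖ ≠ 1 ∧ ‖p.2‖ ≠ ‖p.1‖} :=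
    (measurableSet_eq_fun (by fun_prop) measurable_const).compl.inter
      (measurableSet_eq_fun (by fun_prop) (by fun_prop)).compl
  have hsphere : ∀ᵐ z ∂μ, ‖z‖ ≠ 1 := by
    simpa [ae_iff, Metric.sphere, dist_zero_right] using
      Measure.addHaar_sphere_of_ne_zero μ 0 one_ne_zero
  refine (Measure.ae_prod_iff_ae_ae hmeas).2 ?_
  filter_upwards [hsphere, Measure.ae_ne μ 0] with z hz₁ hz₀
  have hsphere' : ∀ᵐ y ∂ν, ‖y‖ ≠ ‖z‖ := by
    simpa [ae_iff, Metric.sphere, dist_zero_right] using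
      Measure.addHaar_sphere_of_ne_zero ν 0 (norm_ne_zero_iff.2 hz₀)
  filter_upwards [hsphere'] with y hy using ⟨hz₁, hy⟩

theorem tendsto_measureReal_rescaledCone [Nontrivial E] :
    Tendsto (fun s => (μ.prod ν).real (rescaledCone E L s)) (𝓝[>] 0)
      (𝓝 ((μ.prod ν).real {p | ‖p.1‖ < 1 ∧ ‖p.2‖ < ‖p.1‖})) := by
  have hballs : (μ.prod ν) (Metric.ball 0 1 ×ˢ Metric.ball 0 1) ≠ ⊤ := by
    rw [Measure.prod_prod]
    exact ENNReal.mul_ne_top measure_ball_lt_top.ne measure_ball_lt_top.ne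
  refine (ENNReal.continuousAt_toReal ?_).tendsto.comp <|
    tendsto_measure_of_ae_tendsto_indicator _
    measurableSet_norm_lt_one_and_norm_snd_lt_norm_fst (measurableSet_rescaledCone L)
    (Metric.isOpen_ball.measurableSet.prod Metric.isOpen_ball.measurableSet) hballs
    (eventually_nhdsWithin_of_forall fun s hs => rescaledCone_subset L (Set.mem_Ioi.1 hs).le) ?_
  · refine measure_ne_top_of_subset (fun p hp => ?_) hballs
    exact ⟨mem_ball_zero_iff.2 hp.1, mem_ball_zero_iff.2 (hp.2.trans hp.1)⟩
  · filter_upwards [ae_norm_fst_ne_one_and_norm_snd_ne_norm_fst μ ν] with p hp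
    exact nhdsWithin_le_nhds (eventually_mem_rescaledCone_iff L hp.1 hp.2)

theorem tendsto_measureReal_truncatedCone_div_rpow [Nontrivial E] :
    Tendsto (fun s => (μ.prod ν).real (truncatedCone E L s) / s ^ ((finrank ℝ F : ℝ) / 2)) (𝓝[>] 0)
      (𝓝 (|LinearMap.det (L : F →ₗ[ℝ] F)|⁻¹ * (finrank ℝ E / (finrank ℝ E + finrank ℝ F) *
        (μ.real (Metric.ball 0 1) * ν.real (Metric.ball 0 1))))) := by
  have hL₀ : |LinearMap.det (L : F →ₗ[ℝ] F)| ≠ 0 := abs_ne_zero.2 L.isUnit_det'.ne_zero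
  rw [← measureReal_norm_lt_one_and_norm_snd_lt_norm_fst]
  refine ((tendsto_measureReal_rescaledCone μ ν L).const_mul _).congr' ?_
  filter_upwards [self_mem_nhdsWithin] with s hs
  rw [measureReal_rescaledCone μ ν L hs, inv_mul_cancel_left₀ hL₀]

end CapVolume

section SmallBall

variable {ι : Type*} [Fintype ι]

theorem volumeReal_euclideanSpace_ball_zero_one :
    volume.real (Metric.ball (0 : EuclideanSpace ℝ ι) 1) =
      √Real.pi ^ Fintype.card ι / Real.Gamma (Fintype.card ι / 2 + 1) := by
  cases isEmpty_or_nonempty ι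
  · have h₀ : (0 : EuclideanSpace ℝ ι) ∈ Metric.ball 0 1 := Metric.mem_ball_self one_pos
    simp [volume_euclideanSpace_eq_dirac, measureReal_def,
      Measure.dirac_apply' _ Metric.isOpen_ball.measurableSet, h₀]
  · rw [measureReal_def, EuclideanSpace.volume_ball, ENNReal.ofReal_one, one_pow, one_mul,
      ENNReal.toReal_ofReal (by positivity)]

theorem volumeReal_ball_mul_volumeReal_ball_div {κ η : Type*} [Nonempty ι] [Fintype κ] [Fintype η]
    (hcard : Fintype.card η = Fintype.card ι + Fintype.card κ) :
    (Fintype.card ι / (Fintype.card ι + Fintype.card κ) *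
        (volume.real (Metric.ball (0 : EuclideanSpace ℝ ι) 1) *
          volume.real (Metric.ball (0 : EuclideanSpace ℝ κ) 1))) /
        volume.real (Metric.ball (0 : EuclideanSpace ℝ η) 1) =
      Real.Gamma (Fintype.card η / 2) /
        (Real.Gamma (Fintype.card κ / 2 + 1) * Real.Gamma (Fintype.card ι / 2)) := by
  have hι : (0 : ℝ) < Fintype.card ι := Nat.cast_pos.2 Fintype.card_pos
  have hη : (0 : ℝ) < Fintype.card ι + Fintype.card κ := by positivity
  simp only [volumeReal_euclideanSpace_ball_zero_one, hcard, Nat.cast_add, pow_add]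
  rw [Real.Gamma_add_one (half_pos hη).ne', Real.Gamma_add_one (half_pos hι).ne']
  field_simp

/-- The splitting of a vector into its coordinates with and without the property `p`. -/
def coordSplit (p : ι → Prop) (x : EuclideanSpace ℝ ι) :
    EuclideanSpace ℝ {i // p i} × EuclideanSpace ℝ {i // ¬ p i} :=
  (WithLp.toLp 2 fun i => x i, WithLp.toLp 2 fun i => x i)

variable (p : ι → Prop) [DecidablePred p]

theorem measurePreserving_coordSplit :
    MeasurePreserving (coordSplit p : EuclideanSpace ℝ ι → _) volume
      ((volume : Measure (EuclideanSpace ℝ {i // p i})).prod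
        (volume : Measure (EuclideanSpace ℝ {i // ¬ p i}))) :=
  ((PiLp.volume_preserving_toLp _).prod (PiLp.volume_preserving_toLp _)).comp
    ((volume_preserving_piEquivPiSubtypeProd (fun _ : ι => ℝ) p).comp
      (PiLp.volume_preserving_ofLp ι))

theorem norm_sq_coordSplit (x : EuclideanSpace ℝ ι) :
    ‖(coordSplit p x).1‖ ^ 2 + ‖(coordSplit p x).2‖ ^ 2 = ‖x‖ ^ 2 := by
  simp only [EuclideanSpace.real_norm_sq_eq, coordSplit]
  exact Fintype.sum_subtype_add_sum_subtype p fun i => x i ^ 2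

/-- The diagonal linear equivalence of Euclidean space with the nonzero entries `w`. -/
def diagonalEquiv (w : ι → ℝ) (hw : ∀ i, w i ≠ 0) : EuclideanSpace ℝ ι ≃ₗ[ℝ] EuclideanSpace ℝ ι :=
  .withLpCongr 2 (.piCongrRight fun i => .smulOfNeZero ℝ ℝ (w i) (hw i))

theorem det_diagonalEquiv (w : ι → ℝ) (hw : ∀ i, w i ≠ 0) :
    LinearMap.det (diagonalEquiv w hw : EuclideanSpace ℝ ι →ₗ[ℝ] EuclideanSpace ℝ ι) =
      ∏ i, w i := by
  calc _ = LinearMap.det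
        (LinearMap.pi fun i => (w i • LinearMap.id) ∘ₗ LinearMap.proj (R := ℝ) i) :=
        LinearMap.det_conj _ (WithLp.linearEquiv 2 ℝ (ι → ℝ)).symm
    _ = ∏ i, w i := by
        simp only [LinearMap.det_pi, LinearMap.det_ring, LinearMap.smul_apply, LinearMap.id_apply,
          smul_eq_mul, mul_one]

theorem norm_sq_diagonalEquiv_sqrt {b : ι → ℝ} (hb : ∀ i, 0 ≤ b i) (hw : ∀ i, √(b i) ≠ 0)
    (x : EuclideanSpace ℝ ι) :
    ‖diagonalEquiv (fun i => √(b i)) hw x‖ ^ 2 = ∑ i, b i * x i ^ 2 := by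
  rw [EuclideanSpace.real_norm_sq_eq]
  refine Finset.sum_congr rfl fun i _ => ?_
  have hi : diagonalEquiv (fun i => √(b i)) hw x i = √(b i) * x i := rfl
  rw [hi, mul_pow, Real.sq_sqrt (hb i)]

theorem sqrt_ne_zero_of_subtype_ne_zero {ι : Type*} {b : ι → ℝ} (hb : ∀ i, 0 ≤ b i)
    (i : {i // ¬ b i = 0}) : √(b i) ≠ 0 :=
  (Real.sqrt_pos.2 ((hb i).lt_of_ne' i.2)).ne'

section QuadraticForm

variable {b : ι → ℝ}

theorem ball_inter_quadraticForm_le_eq_preimage (hb : ∀ i, 0 ≤ b i) (s : ℝ) :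
    Metric.ball (0 : EuclideanSpace ℝ ι) 1 ∩ {x | ∑ i, b i * x i ^ 2 ≤ s * ‖x‖ ^ 2} =
      coordSplit (fun i => b i = 0) ⁻¹' truncatedCone (EuclideanSpace ℝ {i // b i = 0})
        (diagonalEquiv (fun i => √(b i)) (sqrt_ne_zero_of_subtype_ne_zero hb)) s := by
  ext x
  have hform : ∑ i, b i * x i ^ 2 = ∑ i : {i // ¬ b i = 0}, b i * x i ^ 2 := by
    rw [← Fintype.sum_subtype_add_sum_subtype (fun i => b i = 0),
      Finset.sum_eq_zero fun i _ => by rw [i.2, zero_mul], zero_add]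
  rw [Set.mem_inter_iff, mem_ball_zero_iff, Set.mem_preimage, truncatedCone, Set.mem_ofPred_eq,
    Set.mem_ofPred_eq, norm_sq_coordSplit,
    norm_sq_diagonalEquiv_sqrt (b := fun i : {i // ¬ b i = 0} => b i) (fun i => hb i),
    sq_lt_one_iff₀ (norm_nonneg x), hform]
  rfl

theorem tendsto_volumeReal_quadraticForm_le_div_rpow (hb : ∀ i, 0 ≤ b i)
    [Nonempty {i // b i = 0}] :
    Tendsto (fun s => volume.real (Metric.ball (0 : EuclideanSpace ℝ ι) 1 ∩
        {x | ∑ i, b i * x i ^ 2 ≤ s * ‖x‖ ^ 2}) /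
          s ^ ((Fintype.card {i // ¬ b i = 0} : ℝ) / 2)) (𝓝[>] 0)
      (𝓝 ((∏ i : {i // ¬ b i = 0}, b i ^ (-(1 / 2) : ℝ)) *
        (Fintype.card {i // b i = 0} /
          (Fintype.card {i // b i = 0} + Fintype.card {i // ¬ b i = 0}) *
          (volume.real (Metric.ball (0 : EuclideanSpace ℝ {i // b i = 0}) 1) *
            volume.real (Metric.ball (0 : EuclideanSpace ℝ {i // ¬ b i = 0}) 1))))) := by
  have hw := sqrt_ne_zero_of_subtype_ne_zero hb
  have hdet : |LinearMap.det (diagonalEquiv _ hw : EuclideanSpace ℝ {i // ¬ b i = 0} →ₗ[ℝ] _)|⁻¹ =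
      ∏ i : {i // ¬ b i = 0}, b i ^ (-(1 / 2) : ℝ) := by
    rw [det_diagonalEquiv, abs_of_nonneg (by positivity), ← Finset.prod_inv_distrib]
    exact Finset.prod_congr rfl fun i _ => by rw [Real.rpow_neg (hb i), Real.sqrt_eq_rpow]
  have h := tendsto_measureReal_truncatedCone_div_rpow
    (volume : Measure (EuclideanSpace ℝ {i // b i = 0}))
    (volume : Measure (EuclideanSpace ℝ {i // ¬ b i = 0})) (diagonalEquiv _ hw)
  simp only [finrank_euclideanSpace, hdet] at h
  refine h.congr fun s => ?_
  rw [ball_inter_quadraticForm_le_eq_preimage hb, measureReal_def, measureReal_def,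
    (measurePreserving_coordSplit _).measure_preimage
      (measurableSet_truncatedCone _ s).nullMeasurableSet]

end QuadraticForm

namespace IsRotationInvariant

variable {μ : Measure (EuclideanSpace ℝ ι)} [IsProbabilityMeasure μ]

theorem measureReal_quadraticForm_le [Nonempty ι] (hμ : IsRotationInvariant μ)
    (hμ₁ : ∀ᵐ x ∂μ, ‖x‖ = 1) (b : ι → ℝ) (s : ℝ) :
    μ.real {x | ∑ i, b i * x i ^ 2 ≤ s} =
      volume.real (Metric.ball (0 : EuclideanSpace ℝ ι) 1 ∩
        {x | ∑ i, b i * x i ^ 2 ≤ s * ‖x‖ ^ 2}) /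
          volume.real (Metric.ball (0 : EuclideanSpace ℝ ι) 1) := by
  have hsphere : {x : EuclideanSpace ℝ ι | ∑ i, b i * x i ^ 2 ≤ s} =ᵐ[μ]
      {x | ∑ i, b i * x i ^ 2 ≤ s * ‖x‖ ^ 2} := by
    filter_upwards [hμ₁] with x hx
    exact congrArg (∑ i, b i * x i ^ 2 ≤ ·) (by rw [hx, one_pow, mul_one])
  rw [measureReal_congr hsphere]
  refine hμ.measureReal_cone hμ₁ (measurableSet_le (by fun_prop) (by fun_prop)) fun x => ?_
  rcases eq_or_ne x 0 with rfl | hx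
  · rw [NormedSpace.normalize_zero_eq_zero]
  have hr : 0 < (‖x‖⁻¹) ^ 2 := by positivity
  simp only [NormedSpace.normalize, Set.mem_ofPred_eq, PiLp.smul_apply, smul_eq_mul, norm_smul,
    mul_pow, norm_inv, norm_norm, mul_left_comm _ (‖x‖⁻¹ ^ 2), ← Finset.mul_sum]
  exact mul_le_mul_iff_right₀ hr

theorem tendsto_measureReal_quadraticForm_le_div_rpow (hμ : IsRotationInvariant μ)
    (hμ₁ : ∀ᵐ x ∂μ, ‖x‖ = 1) {b : ι → ℝ} (hb : ∀ i, 0 ≤ b i) [Nonempty {i // b i = 0}] :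
    Tendsto (fun s => μ.real {x | ∑ i, b i * x i ^ 2 ≤ s} /
        s ^ ((Fintype.card {i // ¬ b i = 0} : ℝ) / 2)) (𝓝[>] 0)
      (𝓝 ((∏ i : {i // ¬ b i = 0}, b i ^ (-(1 / 2) : ℝ)) *
        (Real.Gamma (Fintype.card ι / 2) / (Real.Gamma (Fintype.card {i // ¬ b i = 0} / 2 + 1) *
          Real.Gamma (Fintype.card {i // b i = 0} / 2))))) := by
  have : Nonempty ι := .map Subtype.val ‹Nonempty {i // b i = 0}›
  have hcard : Fintype.card ι = Fintype.card {i // b i = 0} + Fintype.card {i // ¬ b i = 0} := by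
    rw [← Fintype.card_sum, Fintype.card_congr (Equiv.sumCompl fun i => b i = 0)]
  have h := (tendsto_volumeReal_quadraticForm_le_div_rpow hb).div_const
    (volume.real (Metric.ball (0 : EuclideanSpace ℝ ι) 1))
  rw [mul_div_assoc, volumeReal_ball_mul_volumeReal_ball_div hcard] at h
  refine h.congr fun s => ?_
  rw [hμ.measureReal_quadraticForm_le hμ₁, div_right_comm]

end IsRotationInvariant

end SmallBall

theorem sum_mul_sq_repr_eq {n : Type*} [Fintype n]
    {v : OrthonormalBasis n ℝ (EuclideanSpace ℝ n)} (lam : n → ℝ) {Λ : ℝ}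
    (hΛ : Λ ≠ 0) {x : EuclideanSpace ℝ n} (hx : ‖x‖ = 1) :
    ∑ i, lam i * v.repr x i ^ 2 = (1 - ∑ i, (1 - lam i / Λ) * v.repr x i ^ 2) * Λ := by
  have hsum : ∑ i, v.repr x i ^ 2 = 1 := by
    rw [← EuclideanSpace.real_norm_sq_eq, v.repr.norm_map, hx, one_pow]
  simp only [sub_mul, one_mul, Finset.sum_sub_distrib, hsum, sub_sub_cancel, Finset.sum_mul]
  exact Finset.sum_congr rfl fun i _ => by field_simp

section QuadraticFormOfMatrix

variable {m n : Type*} [Fintype m] [Fintype n] [DecidableEq n]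

theorem repr_eigenvectorBasis_mulVec {M : Matrix n n ℝ} (hM : M.IsHermitian) (x : n → ℝ) (i : n) :
    hM.eigenvectorBasis.repr (WithLp.toLp 2 (M *ᵥ x)) i =
      hM.eigenvalues i * hM.eigenvectorBasis.repr (WithLp.toLp 2 x) i := by
  have hMt : Mᵀ = M := hM
  simp only [OrthonormalBasis.repr_apply_apply, EuclideanSpace.inner_eq_star_dotProduct,
    star_trivial]
  rw [dotProduct_comm, Matrix.dotProduct_mulVec, ← Matrix.mulVec_transpose, hMt,
    hM.mulVec_eigenvectorBasis, smul_dotProduct, dotProduct_comm, smul_eq_mul]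

theorem norm_sq_toLp_mulVec (A : Matrix m n ℝ) (hA : (Aᵀ * A).IsHermitian) (x : n → ℝ) :
    ‖WithLp.toLp 2 (A *ᵥ x)‖ ^ 2 =
      ∑ i, hA.eigenvalues i * hA.eigenvectorBasis.repr (WithLp.toLp 2 x) i ^ 2 := by
  calc ‖WithLp.toLp 2 (A *ᵥ x)‖ ^ 2
      = inner ℝ (WithLp.toLp 2 ((Aᵀ * A) *ᵥ x)) (WithLp.toLp 2 x) := by
        rw [← real_inner_self_eq_norm_sq, EuclideanSpace.inner_toLp_toLp,
          EuclideanSpace.inner_toLp_toLp, star_trivial, star_trivial, Matrix.dotProduct_mulVec,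
          ← Matrix.mulVec_transpose, Matrix.mulVec_mulVec, dotProduct_comm]
    _ = ∑ i, hA.eigenvalues i * hA.eigenvectorBasis.repr (WithLp.toLp 2 x) i ^ 2 := by
        rw [← hA.eigenvectorBasis.repr.inner_map_map, PiLp.inner_apply]
        refine Finset.sum_congr rfl fun i _ => ?_
        rw [repr_eigenvectorBasis_mulVec, RCLike.inner_apply, conj_trivial, mul_left_comm,
          ← sq]

theorem exists_orthonormalBasis_norm_sq_toLp_mulVec {A : Matrix n n ℝ} {lam : n → ℝ}
    (hlam : ∃ (hH : (A * Aᵀ).IsHermitian) (σ : Equiv.Perm n), ∀ i, lam i = hH.eigenvalues (σ i)) :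
    ∃ v : OrthonormalBasis n ℝ (EuclideanSpace ℝ n), ∀ x,
      ‖WithLp.toLp 2 (A *ᵥ x)‖ ^ 2 = ∑ i, lam i * v.repr (WithLp.toLp 2 x) i ^ 2 := by
  obtain ⟨hH, σ, hσ⟩ := hlam
  have hA : (Aᵀ * A).IsHermitian := Matrix.isHermitian_conjTranspose_mul_self A
  have heig : hA.eigenvalues = hH.eigenvalues :=
    (hA.eigenvalues_eq_eigenvalues_iff hH).2 (Matrix.charpoly_mul_comm _ _)
  refine ⟨hA.eigenvectorBasis.reindex σ.symm, fun x => ?_⟩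
  rw [norm_sq_toLp_mulVec A hA, ← Equiv.sum_comp σ]
  simp only [OrthonormalBasis.repr_reindex, Equiv.symm_symm, heig, hσ]

end QuadraticFormOfMatrix

section EllipticalVector

variable {Ω : Type*} [MeasurableSpace Ω] {P : Measure Ω} {d : ℕ}
  {A : Matrix (Fin d) (Fin d) ℝ} {b : Fin d → ℝ} {Λ : ℝ}
  {v : OrthonormalBasis (Fin d) ℝ (EuclideanSpace ℝ (Fin d))}

theorem eNorm_mulVec_smul {q : ℝ} (hΛ : 0 ≤ Λ) {x : Fin d → ℝ}
    (hq : ‖WithLp.toLp 2 (A *ᵥ x)‖ ^ 2 = (1 - q) * Λ) {r : ℝ} (hr : 0 ≤ r) :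
    eNorm (A *ᵥ (r • x)) = r * √(1 - q) * √Λ := by
  rw [Matrix.mulVec_smul, eNorm_eq_norm_toLp, WithLp.toLp_smul, norm_smul,
    Real.norm_of_nonneg hr, mul_assoc, ← Real.sqrt_mul' _ hΛ, ← hq, Real.sqrt_sq (norm_nonneg _)]

theorem IsUniformOnSphere.map_repr {U : Ω → Fin d → ℝ} (hU : IsUniformOnSphere P U) :
    P.map (fun ω => v.repr (WithLp.toLp 2 (U ω))) = P.map fun ω => WithLp.toLp 2 (U ω) := by
  conv_rhs => rw [← hU.isRotationInvariant v.repr]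
  rw [Measure.map_map v.repr.continuous.measurable hU.measurable_toLp]
  rfl

theorem IsUniformOnSphere.tendsto_measureReal_quadraticForm_repr_le_div_rpow
    [IsProbabilityMeasure P] {U : Ω → Fin d → ℝ} (hU : IsUniformOnSphere P U)
    (hb : ∀ i, 0 ≤ b i) [Nonempty {i // b i = 0}] :
    Tendsto (fun s => P.real {ω | ∑ i, b i * v.repr (WithLp.toLp 2 (U ω)) i ^ 2 ≤ s} /
        s ^ ((Fintype.card {i // ¬ b i = 0} : ℝ) / 2)) (𝓝[>] 0)
      (𝓝 ((∏ i : {i // ¬ b i = 0}, b i ^ (-(1 / 2) : ℝ)) *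
        (Real.Gamma (d / 2) / (Real.Gamma (Fintype.card {i // ¬ b i = 0} / 2 + 1) *
          Real.Gamma (Fintype.card {i // b i = 0} / 2))))) := by
  have : IsProbabilityMeasure (P.map fun ω => WithLp.toLp 2 (U ω)) :=
    Measure.isProbabilityMeasure_map hU.measurable_toLp.aemeasurable
  have hnorm : ∀ᵐ x ∂P.map fun ω => WithLp.toLp 2 (U ω), ‖x‖ = 1 :=
    (ae_map_iff hU.measurable_toLp.aemeasurable
      (measurableSet_eq_fun measurable_norm measurable_const)).2 (.of_forall hU.norm_toLp)
  have h := hU.isRotationInvariant.tendsto_measureReal_quadraticForm_le_div_rpow hnorm hb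
  rw [Fintype.card_fin] at h
  refine h.congr fun s => ?_
  have hmeas : MeasurableSet {x : EuclideanSpace ℝ (Fin d) | ∑ i, b i * x i ^ 2 ≤ s} :=
    measurableSet_le (by fun_prop) measurable_const
  have hrepr : Measurable fun ω => v.repr (WithLp.toLp 2 (U ω)) :=
    v.repr.continuous.measurable.comp hU.measurable_toLp
  rw [← hU.map_repr (v := v), map_measureReal_apply hrepr hmeas]
  rfl

variable [IsProbabilityMeasure P] {R : Ω → ℝ} {U : Ω → Fin d → ℝ} {γ : ℝ}

theorem tendsto_survival_eNorm_mulVec_smul_div (hRm : Measurable R) (hR₀ : ∀ ω, 0 ≤ R ω)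
    (hU : IsUniformOnSphere P U) (hRU : IndepFun R U P)
    (hR : HasWeibullTail (survival P R) γ) (hγ : 0 < γ) (hΛ : 0 < Λ) (hb : ∀ i, 0 ≤ b i)
    [Nonempty {i // b i = 0}]
    (hv : ∀ x, ‖WithLp.toLp 2 x‖ = 1 → ‖WithLp.toLp 2 (A *ᵥ x)‖ ^ 2 =
      (1 - ∑ i, b i * v.repr (WithLp.toLp 2 x) i ^ 2) * Λ) :
    Tendsto (fun u => survival P (fun ω => eNorm (A *ᵥ (R ω • U ω))) ((1 - u) * √Λ) /
        ((2 * u) ^ ((Fintype.card {i // ¬ b i = 0} : ℝ) / 2) * survival P R (1 - u)))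
      (𝓝[>] 0)
      (𝓝 ((∏ i : {i // ¬ b i = 0}, b i ^ (-(1 / 2) : ℝ)) *
        (Real.Gamma (γ + 1) / Real.Gamma (γ + (Fintype.card {i // ¬ b i = 0} + 2) / 2)) *
        (Real.Gamma (d / 2) / Real.Gamma (Fintype.card {i // b i = 0} / 2)))) := by
  let Q : (Fin d → ℝ) → ℝ := fun x => ∑ i, b i * v.repr (WithLp.toLp 2 x) i ^ 2
  have hQ : Measurable Q := by
    have hto : Measurable fun x : Fin d → ℝ => v.repr (WithLp.toLp 2 x) :=
      v.repr.continuous.measurable.comp (WithLp.measurable_toLp 2 _)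
    fun_prop
  have hQ₀ : ∀ ω, 0 ≤ Q (U ω) := fun ω =>
    Finset.sum_nonneg fun i _ => mul_nonneg (hb i) (sq_nonneg _)
  have hnorm : ∀ ω, eNorm (A *ᵥ (R ω • U ω)) = R ω * √(1 - Q (U ω)) * √Λ := fun ω =>
    eNorm_mulVec_smul hΛ.le (hv _ (hU.norm_toLp ω)) (hR₀ ω)
  convert tendsto_survival_mul_sqrt_one_sub_div hRm (hQ.comp hU.1) (hRU.comp measurable_id hQ) hQ₀
    hR hγ (by positivity)
    (hU.tendsto_measureReal_quadraticForm_repr_le_div_rpow (v := v) hb) using 2 with u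
  · simp only [survival, hnorm, mul_lt_mul_iff_left₀ (Real.sqrt_pos.2 hΛ), Function.comp_apply]
  · rw [add_assoc γ, add_div, div_self two_ne_zero]
    field_simp

theorem tendsto_survival_eNorm_mulVec_smul_div_one (hRm : Measurable R) (hR₀ : ∀ ω, 0 ≤ R ω)
    (hU : IsUniformOnSphere P U) (hRU : IndepFun R U P)
    (hR : HasWeibullTail (survival P R) γ) (hγ : 0 < γ) (hΛ : 0 < Λ) (hb : ∀ i, 0 ≤ b i)
    [Nonempty {i // b i = 0}]
    (hv : ∀ x, ‖WithLp.toLp 2 x‖ = 1 → ‖WithLp.toLp 2 (A *ᵥ x)‖ ^ 2 =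
      (1 - ∑ i, b i * v.repr (WithLp.toLp 2 x) i ^ 2) * Λ) :
    Tendsto (fun u => survival P (fun ω => eNorm (A *ᵥ (R ω • U ω))) ((1 - u) * √Λ) /
        ((∏ i : {i // ¬ b i = 0}, b i ^ (-(1 / 2) : ℝ)) *
          (Real.Gamma (γ + 1) / Real.Gamma (γ + (Fintype.card {i // ¬ b i = 0} + 2) / 2)) *
          (Real.Gamma (d / 2) / Real.Gamma (Fintype.card {i // b i = 0} / 2)) *
          (2 * u) ^ ((Fintype.card {i // ¬ b i = 0} : ℝ) / 2) * survival P R (1 - u)))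
      (𝓝[>] 0) (𝓝 1) := by
  have hd : 0 < d := Fin.pos (Classical.arbitrary {i // b i = 0}).1
  have hprod : 0 < ∏ i : {i // ¬ b i = 0}, b i ^ (-(1 / 2) : ℝ) :=
    Finset.prod_pos fun i _ => Real.rpow_pos_of_pos ((hb i).lt_of_ne' i.2) _
  have hlim := tendsto_survival_eNorm_mulVec_smul_div hRm hR₀ hU hRU hR hγ hΛ hb hv
  set c := (∏ i : {i // ¬ b i = 0}, b i ^ (-(1 / 2) : ℝ)) *
    (Real.Gamma (γ + 1) / Real.Gamma (γ + (Fintype.card {i // ¬ b i = 0} + 2) / 2)) *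
    (Real.Gamma (d / 2) / Real.Gamma (Fintype.card {i // b i = 0} / 2))
  have hc₀ : c ≠ 0 := by positivity
  have hratio := hlim.div_const c
  rw [div_self hc₀] at hratio
  refine hratio.congr fun u => ?_
  rw [div_div, mul_comm _ c, ← mul_assoc]

end EllipticalVector

section EigenvalueCount

variable {n : Type*} {lam : n → ℝ} {Λ : ℝ}

theorem one_sub_div_eq_zero_iff (hΛ : Λ ≠ 0) (i : n) : 1 - lam i / Λ = 0 ↔ lam i = Λ := by
  rw [sub_eq_zero, eq_comm, div_eq_one_iff_eq hΛ]

variable [Fintype n]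

theorem card_one_sub_div_eq_zero (hΛ : Λ ≠ 0) :
    Fintype.card {i // 1 - lam i / Λ = 0} = (Finset.univ.filter fun i => lam i = Λ).card := by
  simp only [Fintype.card_subtype, one_sub_div_eq_zero_iff hΛ]

theorem card_one_sub_div_ne_zero (hΛ : Λ ≠ 0) :
    (Fintype.card {i // ¬ 1 - lam i / Λ = 0} : ℝ) =
      Fintype.card n - (Finset.univ.filter fun i => lam i = Λ).card := by
  rw [Fintype.card_subtype_compl, Nat.cast_sub (Fintype.card_subtype_le _),
    card_one_sub_div_eq_zero hΛ]

theorem prod_subtype_one_sub_div_ne_zero (hΛ : Λ ≠ 0) (f : ℝ → ℝ) :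
    ∏ i : {i // ¬ 1 - lam i / Λ = 0}, f (lam i) =
      ∏ i ∈ Finset.univ.filter (fun i => lam i ≠ Λ), f (lam i) :=
  (Finset.prod_subtype _ (by simp [one_sub_div_eq_zero_iff hΛ]) fun i => f (lam i)).symm

end EigenvalueCount

/-- Theorem 3 (Weibull case): tail asymptotics of the norm of an elliptical random vector. -/
theorem norm_elliptical_tail_weibull
    {Ω : Type*} [MeasurableSpace Ω] (P : Measure Ω) [IsProbabilityMeasure P]
    (d : ℕ) [NeZero d] (hd : 2 ≤ d)
    (A : Matrix (Fin d) (Fin d) ℝ)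
    (R : Ω → ℝ) (U : Ω → Fin d → ℝ)
    (hRmeas : Measurable R) (hRpos : ∀ ω, 0 < R ω)
    (hU : IsUniformOnSphere P U)
    (hInd : IndepFun R U P)
    (X : Ω → Fin d → ℝ) (hX : ∀ ω, X ω = A.mulVec (R ω • U ω))
    -- `F` is the distribution function of `R`
    (F : ℝ → ℝ) (hF : ∀ u, F u = (P {ω | R ω ≤ u}).toReal) (hF0 : F 0 = 0)
    -- `lam` enumerates the eigenvalues of `Σ = A Aᵀ` in decreasing order
    (lam : Fin d → ℝ) (hmono : Antitone lam)
    (hlam : ∃ (hH : (A * Aᵀ).IsHermitian) (σ : Equiv.Perm (Fin d)),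
      ∀ i, lam i = hH.eigenvalues (σ i))
    (hlam0 : 0 < lam 0)
    -- `m` is the multiplicity of the largest eigenvalue `lam 0 = λ_(m)`
    (m : ℕ) (hm : m = (Finset.univ.filter fun j => lam j = lam 0).card)
    (Cstar : ℝ)
    (hC : Cstar = ∏ j ∈ Finset.univ.filter (fun j => lam j ≠ lam 0),
      ((1 : ℝ) - lam j / lam 0) ^ (-(1 / 2 : ℝ)))
    -- the upper endpoint of `F` is `1` and `F` is in the max-domain of attraction of `Ψ_γ`
    (hxF : IsLUB {u | F u < 1} 1)
    (γ : ℝ) (hγ : 0 < γ)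
    (hMDA : ∀ x : ℝ, 0 < x →
      Tendsto (fun u => (1 - F (1 - x / u)) / (1 - F (1 - 1 / u))) atTop (𝓝 (x ^ γ)))
 :
    Tendsto (fun u =>
        (P {ω | eNorm (X ω) > (1 - u) * Real.sqrt (lam 0)}).toReal /
          (Cstar * (Real.Gamma (γ + 1) / Real.Gamma (γ + ((d : ℝ) - (m : ℝ) + 2) / 2)) *
            (Real.Gamma ((d : ℝ) / 2) / Real.Gamma ((m : ℝ) / 2)) *
            (2 * u) ^ (((d : ℝ) - (m : ℝ)) / 2) * (1 - F (1 - u))))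
      (𝓝[>] (0 : ℝ)) (𝓝 1) := by
  obtain ⟨v, hv⟩ := exists_orthonormalBasis_norm_sq_toLp_mulVec hlam
  have hb : ∀ i, 0 ≤ 1 - lam i / lam 0 := fun i =>
    sub_nonneg.2 ((div_le_one hlam0).2 (hmono (Fin.zero_le i)))
  have : Nonempty {i // 1 - lam i / lam 0 = 0} := ⟨0, (one_sub_div_eq_zero_iff hlam0.ne' 0).2 rfl⟩
  have hT : ∀ x, survival P R x = 1 - F x := fun x => by
    rw [survival_eq_one_sub hRmeas, hF, measureReal_def]
  have hR : HasWeibullTail (survival P R) γ := hasWeibullTail_of_tendsto_atTop (by simpa only [hT])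
  have hlim := tendsto_survival_eNorm_mulVec_smul_div_one hRmeas (fun ω => (hRpos ω).le) hU hInd hR
    hγ hlam0 hb fun x hx => (hv x).trans (sum_mul_sq_repr_eq lam hlam0.ne' hx)
  simp only [card_one_sub_div_eq_zero hlam0.ne', card_one_sub_div_ne_zero hlam0.ne',
    Fintype.card_fin, ← hm, hT,
    prod_subtype_one_sub_div_ne_zero hlam0.ne' fun t => (1 - t / lam 0) ^ (-(1 / 2) : ℝ),
    ← hC, ← hX] at hlim
  exact hlim
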